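/- Let H(s) = C(A - sE)⁻¹B and Ĥ(s) = Ĉ(Â - sÊ)⁻¹B̂ be transfer functions of two asymptotically stable descriptor systems (E, Ê invertible, all generalized eigenvalues in the open left half-plane). Then the squared H₂-norm of the difference satisfies ‖H - Ĥ‖²_{H₂} = trace(C P Cᵀ) - 2 trace(C P̃ Ĉᵀ) + trace(Ĉ P̂ Ĉᵀ), where P and P̂ are the controllability Gramians of the two systems (solving A P Eᵀ + E P Aᵀ = -B Bᵀ and the analogous reduced equation), and P̃ solves the Sylvester equation A P̃ Êᵀ + E P̃ Âᵀ = -B B̂ᵀ. -/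

import Mathlib

open Matrix MeasureTheory

noncomputable section

/-- Complexification of a real matrix. -/
def cmap {a b : ℕ} (A : Matrix (Fin a) (Fin b) ℝ) : Matrix (Fin a) (Fin b) ℂ :=
  A.map fun x => (x : ℂ)

/-! The difference of the two transfer functions is the transfer function of the block-diagonal
error system, and `P`, `P̂`, `P̃` are the blocks of its Gramian, so it suffices to compute the `H₂`
norm of one stable system. Multiplying by `E⁻¹` reduces this to the case `E = 1`. There, with `R_A`
the resolvent of `A`, the Lyapunov equation `A P + P Aᴴ = -Q` gives
`R_A(iω) Q R_A(iω)ᴴ = R_A(iω) P + P R_A(iω)ᴴ`. Neither term on the right need be integrable, but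
`R_A(s) - (1 + s)⁻¹` is holomorphic on the closed right half-plane and `O(s⁻²)`, so its integral
along the imaginary axis vanishes by Cauchy's theorem. What is left is
`∫ 2 / (1 + ω²) dω • P = 2π P`. -/

section RightHalfPlane

open Asymptotics Bornology Complex Filter Topology

theorem one_add_isTheta_id : (fun z : ℂ => 1 + z) =Θ[cobounded ℂ] id :=
  (isLittleO_const_id_cobounded (1 : ℂ)).right_isTheta_add.symm

theorem integrable_imaginary_axis_of_isBigO {V : Type*} [NormedAddCommGroup V] {f : ℂ → V}
    (hc : Continuous fun ω : ℝ => f (I * ω))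
    (hO : f =O[cobounded ℂ] fun z => z⁻¹ * z⁻¹) : Integrable fun ω : ℝ => f (I * ω) := by
  have hline : Tendsto (fun ω : ℝ => I * (ω : ℂ)) (cocompact ℝ) (cobounded ℂ) := by
    rw [← tendsto_norm_atTop_iff_cobounded]
    simpa only [norm_mul, norm_I, one_mul, norm_real] using tendsto_norm_cocompact_atTop (E := ℝ)
  have hnorm : ∀ ω : ℝ, ‖(1 + I * ω)⁻¹ * (1 + I * ω)⁻¹‖ = (1 + ω ^ 2)⁻¹ := fun ω => by
    rw [← mul_inv, norm_inv, norm_mul, norm_mul_self_eq_normSq, mul_comm I, ← ofReal_one,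
      normSq_add_mul_I, one_pow]
  have hdecay : (fun ω : ℝ => f (I * ω)) =O[cocompact ℝ] fun ω => (1 + ω ^ 2)⁻¹ :=
    ((hO.trans (one_add_isTheta_id.inv.mul one_add_isTheta_id.inv).symm.isBigO).comp_tendsto
      hline).trans (.of_norm_left (by simpa only [Function.comp_def, hnorm] using isBigO_refl _ _))
  exact hc.locallyIntegrable.integrable_of_isBigO_cocompact hdecay
    (integrable_inv_one_add_sq.integrableAtFilter _)

variable {V : Type*} [NormedAddCommGroup V] [NormedSpace ℂ V] {f : ℂ → V}

theorem norm_integral_imaginary_segment_le (hd : DifferentiableOn ℂ f {z | 0 ≤ z.re})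
    {T ε : ℝ} (hT : 0 ≤ T) (hε : ∀ z : ℂ, 0 ≤ z.re → T ≤ ‖z‖ → ‖f z‖ ≤ ε) :
    ‖∫ ω in -T..T, f (I * ω)‖ ≤ 4 * T * ε := by
  have hlower : ‖∫ x in 0..T, f (x - T * I)‖ ≤ ε * |T - 0| := by
    refine intervalIntegral.norm_integral_le_of_norm_le_const fun x hx => hε _ ?_ ?_
    · simpa using (Set.uIoc_of_le hT ▸ hx).1.le
    · simpa [abs_of_nonneg hT] using abs_im_le_norm ((x : ℂ) - T * I)
  have hupper : ‖∫ x in 0..T, f (x + T * I)‖ ≤ ε * |T - 0| := by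
    refine intervalIntegral.norm_integral_le_of_norm_le_const fun x hx => hε _ ?_ ?_
    · simpa using (Set.uIoc_of_le hT ▸ hx).1.le
    · simpa [abs_of_nonneg hT] using abs_im_le_norm ((x : ℂ) + T * I)
  have hright : ‖∫ y in -T..T, f (T + y * I)‖ ≤ ε * |T - -T| := by
    refine intervalIntegral.norm_integral_le_of_norm_le_const fun y _ => hε _ ?_ ?_
    · simpa using hT
    · simpa [abs_of_nonneg hT] using abs_re_le_norm ((T : ℂ) + y * I)
  have hcauchy : (∫ x in 0..T, f (x - T * I)) - (∫ x in 0..T, f (x + T * I)) +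
      I • (∫ y in -T..T, f (T + y * I)) - I • (∫ ω in -T..T, f (I * ω)) = 0 := by
    have hrect : Set.uIcc (-T * I : ℂ).re (T + T * I : ℂ).re ×ℂ
        Set.uIcc (-T * I : ℂ).im (T + T * I : ℂ).im ⊆ {z | 0 ≤ z.re} := by
      rintro z ⟨hz, -⟩
      have hz : 0 ≤ z.re ∧ z.re ≤ T := by simpa [Set.uIcc_of_le, hT] using hz
      exact hz.1
    simpa [sub_eq_add_neg, mul_comm I] using
      integral_boundary_rect_eq_zero_of_differentiableOn f _ _ (hd.mono hrect)
  calc ‖∫ ω in -T..T, f (I * ω)‖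
      = ‖(∫ x in 0..T, f (x - T * I)) - (∫ x in 0..T, f (x + T * I)) +
          I • (∫ y in -T..T, f (T + y * I))‖ := by
        rw [sub_eq_zero.1 hcauchy, norm_smul, norm_I, one_mul]
    _ ≤ ‖∫ x in 0..T, f (x - T * I)‖ + ‖∫ x in 0..T, f (x + T * I)‖ +
          ‖∫ y in -T..T, f (T + y * I)‖ := by
        refine (norm_add_le _ _).trans (add_le_add (norm_sub_le _ _) ?_)
        rw [norm_smul, norm_I, one_mul]
    _ ≤ ε * |T - 0| + ε * |T - 0| + ε * |T - -T| := by gcongr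
    _ = 4 * T * ε := by
        rw [sub_zero, sub_neg_eq_add, abs_of_nonneg hT, abs_of_nonneg (add_nonneg hT hT)]
        ring

theorem integral_imaginary_axis_eq_zero (hd : DifferentiableOn ℂ f {z | 0 ≤ z.re})
    (ho : f =o[cobounded ℂ ⊓ 𝓟 {z | 0 ≤ z.re}] (·⁻¹ : ℂ → ℂ))
    (hint : Integrable fun ω : ℝ => f (I * ω)) : ∫ ω : ℝ, f (I * ω) = 0 := by
  have hlim : Tendsto (fun T : ℝ => ∫ ω in -T..T, f (I * ω)) atTop (𝓝 0) := by
    refine Metric.nhds_basis_closedBall.tendsto_right_iff.2 fun δ hδ => ?_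
    obtain ⟨r, -, hr⟩ := (hasBasis_cobounded_norm (E := ℂ)).mem_iff.1
      (eventually_inf_principal.1 (ho.bound (show 0 < δ / 4 by positivity)))
    filter_upwards [eventually_ge_atTop r, eventually_gt_atTop 0] with T hrT hT
    have hdecay : ∀ z : ℂ, 0 ≤ z.re → T ≤ ‖z‖ → ‖f z‖ ≤ δ / 4 * T⁻¹ := fun z hz hTz =>
      (hr (hrT.trans hTz) hz).trans (by rw [norm_inv]; gcongr)
    rw [mem_closedBall_zero_iff]
    exact (norm_integral_imaginary_segment_le hd hT.le hdecay).trans_eq (by field_simp)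
  exact tendsto_nhds_unique
    (intervalIntegral_tendsto_integral hint tendsto_neg_atTop_atBot tendsto_id) hlim

end RightHalfPlane

section Resolvent

open Asymptotics Bornology Complex Filter Topology

theorem resolvent_mul_mul_resolvent_neg {R A : Type*} [CommRing R] [Ring A] [Algebra R A]
    {a b x q : A} {s : R} (ha : s ∈ resolventSet R a) (hb : -s ∈ resolventSet R b)
    (hx : a * x + x * b = -q) :
    resolvent a s * q * resolvent b (-s) = resolvent a s * x + x * resolvent b (-s) := by
  have hq : q = (algebraMap R A s - a) * x + x * (algebraMap R A (-s) - b) := by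
    rw [← neg_neg q, ← hx, map_neg, sub_mul, mul_sub, mul_neg, ← Algebra.commutes s x]
    abel
  have hleft : resolvent a s * (algebraMap R A s - a) = 1 := Ring.inverse_mul_cancel _ ha
  have hright : (algebraMap R A (-s) - b) * resolvent b (-s) = 1 := Ring.mul_inverse_cancel _ hb
  rw [hq, mul_add, add_mul, ← mul_assoc, hleft, one_mul, mul_assoc, mul_assoc, hright, mul_one,
    add_comm]

theorem resolvent_sub_inv_smul_one {𝕜 A : Type*} [Field 𝕜] [Ring A] [Algebra 𝕜 A] {a : A}
    {s t : 𝕜} (hs : s ∈ resolventSet 𝕜 a) (hst : t + s ≠ 0) :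
    resolvent a s - (t + s)⁻¹ • 1 = (t + s)⁻¹ • (resolvent a s * (a + algebraMap 𝕜 A t)) := by
  have hleft : resolvent a s * (algebraMap 𝕜 A s - a) = 1 := Ring.inverse_mul_cancel _ hs
  have h : (t + s) • resolvent a s = 1 + resolvent a s * (a + algebraMap 𝕜 A t) := by
    rw [← hleft, ← mul_add, add_comm a, sub_add_add_cancel, ← map_add, add_comm s,
      ← Algebra.commutes, Algebra.smul_def]
  rw [sub_eq_iff_eq_add', ← smul_add, ← h, inv_smul_smul₀ hst]

/-- An element of a complex algebra is Hurwitz if its spectrum lies in the open left half-plane,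
which for the state matrix of a linear system is asymptotic stability. -/
def IsHurwitz {𝒜 : Type*} [Ring 𝒜] [Algebra ℂ 𝒜] (a : 𝒜) : Prop :=
  ∀ z ∈ spectrum ℂ a, z.re < 0

theorem IsHurwitz.mem_resolventSet {𝒜 : Type*} [Ring 𝒜] [Algebra ℂ 𝒜] {a : 𝒜}
    (ha : IsHurwitz a) {z : ℂ} (hz : 0 ≤ z.re) : z ∈ resolventSet ℂ a :=
  not_not.1 fun h => hz.not_gt (ha z h)

theorem IsHurwitz.star {𝒜 : Type*} [Ring 𝒜] [StarRing 𝒜] [Algebra ℂ 𝒜] [StarModule ℂ 𝒜] {a : 𝒜}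
    (ha : IsHurwitz a) : IsHurwitz (star a) := fun z hz => by
  rw [spectrum.map_star] at hz
  simpa using ha _ hz

/-- The difference between the resolvents of `a` and `-1`. It isolates the part of the resolvent
of `a` that is integrable along the imaginary axis. -/
def resolventRemainder {𝒜 : Type*} [Ring 𝒜] [Algebra ℂ 𝒜] (a : 𝒜) (z : ℂ) : 𝒜 :=
  resolvent a z - (1 + z)⁻¹ • 1

/-- Up to terms whose integral vanishes, the two resolvents are `(1 ± iω)⁻¹`, and these add up to
`2 / (1 + ω²)`, whose integral is `2π`. -/
theorem IsHurwitz.resolvent_mul_mul_resolvent_neg_eq_remainder {𝒜 : Type*} [Ring 𝒜] [Algebra ℂ 𝒜]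
    {a b x q : 𝒜} (ha : IsHurwitz a) (hb : IsHurwitz b) (hx : a * x + x * b = -q) (ω : ℝ) :
    resolvent a (I * ω) * q * resolvent b (-(I * ω)) =
      resolventRemainder a (I * ω) * x + x * resolventRemainder b (I * ↑(-ω)) +
        (2 * (1 + ω ^ 2)⁻¹) • x := by
  have hne : ∀ t : ℝ, 1 + I * t ≠ (0 : ℂ) := fun t h => by simpa using congrArg re h
  have hsum : (1 + I * ω : ℂ)⁻¹ + (1 + I * ↑(-ω))⁻¹ = (2 * (1 + ω ^ 2)⁻¹ : ℝ) := by
    have hprod : (1 + I * ω) * (1 + I * ↑(-ω)) = (1 + ω ^ 2 : ℂ) := by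
      push_cast
      linear_combination -(ω : ℂ) ^ 2 * I_sq
    rw [inv_add_inv (hne ω) (hne (-ω)), hprod]
    push_cast
    ring
  rw [resolvent_mul_mul_resolvent_neg (ha.mem_resolventSet (by simp))
    (hb.mem_resolventSet (by simp)) hx, ← coe_smul, ← hsum, add_smul]
  simp only [resolventRemainder, sub_mul, mul_sub, smul_mul_assoc, mul_smul_comm, one_mul, mul_one,
    ofReal_neg, mul_neg]
  abel

variable {𝒜 : Type*} [NormedRing 𝒜] [NormedAlgebra ℂ 𝒜] [CompleteSpace 𝒜] {a b : 𝒜}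

theorem resolventRemainder_isBigO (a : 𝒜) :
    resolventRemainder a =O[cobounded ℂ] fun z => z⁻¹ * z⁻¹ := by
  have hfactor : (fun z : ℂ => (1 + z)⁻¹ • (resolvent a z * (a + algebraMap ℂ 𝒜 1)))
      =O[cobounded ℂ] fun z => z⁻¹ * z⁻¹ :=
    one_add_isTheta_id.inv.isBigO.smul (by
      simpa using (spectrum.resolvent_isBigO_inv a).mul
        (isBigO_const_const (a + algebraMap ℂ 𝒜 1) (one_ne_zero (α := ℂ)) _))
  have hresolvent : ∀ᶠ z in cobounded ℂ, z ∈ resolventSet ℂ a := by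
    simpa only [spectrum, compl_compl] using! isBounded_def.1 (spectrum.isBounded (𝕜 := ℂ) a)
  refine hfactor.congr' ?_ .rfl
  filter_upwards [hresolvent, eventually_ne_cobounded (-1)] with z hz hne
  exact (resolvent_sub_inv_smul_one hz fun h => hne (eq_neg_of_add_eq_zero_right h)).symm

namespace IsHurwitz

theorem differentiableOn_resolventRemainder (ha : IsHurwitz a) :
    DifferentiableOn ℂ (resolventRemainder a) {z | 0 ≤ z.re} := by
  intro z (hz : 0 ≤ z.re)
  have hne : 1 + z ≠ 0 := fun h => by
    have hre : 1 + z.re = 0 := by simpa using congrArg re h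
    linarith
  exact ((spectrum.hasDerivAt_resolvent_const_left
    (ha.mem_resolventSet hz)).differentiableAt.sub
      (((differentiableAt_id.const_add 1).inv hne).smul_const 1)).differentiableWithinAt

theorem integrable_resolventRemainder (ha : IsHurwitz a) :
    Integrable fun ω : ℝ => resolventRemainder a (I * ω) :=
  integrable_imaginary_axis_of_isBigO
    (ha.differentiableOn_resolventRemainder.continuousOn.comp_continuous
      (by fun_prop) fun ω => by simp)
    (resolventRemainder_isBigO a)

theorem integral_resolventRemainder (ha : IsHurwitz a) :
    ∫ ω : ℝ, resolventRemainder a (I * ω) = 0 := by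
  have hinv : (fun z : ℂ => z⁻¹ * z⁻¹) =o[cobounded ℂ] fun z => z⁻¹ := by
    simpa using ((isLittleO_one_iff ℂ).2 (tendsto_inv₀_cobounded (α := ℂ))).mul_isBigO
      (isBigO_refl (fun z : ℂ => z⁻¹) (cobounded ℂ))
  exact integral_imaginary_axis_eq_zero ha.differentiableOn_resolventRemainder
    (((resolventRemainder_isBigO a).trans_isLittleO hinv).mono inf_le_left)
    ha.integrable_resolventRemainder

theorem integrable_resolvent_mul_mul_resolvent_neg (ha : IsHurwitz a) (hb : IsHurwitz b)
    {x q : 𝒜} (hx : a * x + x * b = -q) :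
    Integrable fun ω : ℝ => resolvent a (I * ω) * q * resolvent b (-(I * ω)) := by
  simp_rw [ha.resolvent_mul_mul_resolvent_neg_eq_remainder hb hx]
  exact ((ha.integrable_resolventRemainder.mul_const x).add
    (hb.integrable_resolventRemainder.comp_neg.const_mul x)).add
    ((integrable_inv_one_add_sq.const_mul 2).smul_const x)

theorem integral_resolvent_mul_mul_resolvent_neg (ha : IsHurwitz a) (hb : IsHurwitz b)
    {x q : 𝒜} (hx : a * x + x * b = -q) :
    ∫ ω : ℝ, resolvent a (I * ω) * q * resolvent b (-(I * ω)) = (2 * Real.pi) • x := by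
  have hra := ha.integrable_resolventRemainder
  have hrb := hb.integrable_resolventRemainder.comp_neg
  have hrem : Integrable fun ω : ℝ =>
      resolventRemainder a (I * ω) * x + x * resolventRemainder b (I * ↑(-ω)) :=
    (hra.mul_const x).add (hrb.const_mul x)
  simp_rw [ha.resolvent_mul_mul_resolvent_neg_eq_remainder hb hx]
  rw [integral_add hrem ((integrable_inv_one_add_sq.const_mul 2).smul_const x),
    integral_add (hra.mul_const x) (hrb.const_mul x), integral_mul_const_of_integrable hra,
    integral_const_mul_of_integrable hrb,
    integral_neg_eq_self (fun ω : ℝ => resolventRemainder b (I * ω)),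
    ha.integral_resolventRemainder, hb.integral_resolventRemainder, integral_smul_const,
    integral_const_mul, integral_univ_inv_one_add_sq, zero_mul, mul_zero, add_zero, zero_add]

theorem integral_apply_resolvent_mul_mul_resolvent_neg (ha : IsHurwitz a) (hb : IsHurwitz b)
    {x q : 𝒜} (hx : a * x + x * b = -q) {F : Type*} [NormedAddCommGroup F] [NormedSpace ℝ F]
    [CompleteSpace F] (L : 𝒜 →L[ℝ] F) :
    ∫ ω : ℝ, L (resolvent a (I * ω) * q * resolvent b (-(I * ω))) = (2 * Real.pi) • L x := by
  rw [L.integral_comp_comm (ha.integrable_resolvent_mul_mul_resolvent_neg hb hx),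
    ha.integral_resolvent_mul_mul_resolvent_neg hb hx, map_smul]

end IsHurwitz

end Resolvent

section Pencil

variable {n m p R : Type*} [Fintype n] [DecidableEq n] [CommRing R]

/-- The transfer function `C (A - s E)⁻¹ B` of a descriptor system. -/
def transferFunction (A E : Matrix n n R) (B : Matrix n m R) (C : Matrix p n R) (s : R) :
    Matrix p m R :=
  C * (A - s • E)⁻¹ * B

theorem pencil_eq_neg_mul {A E : Matrix n n R} (hE : IsUnit E) (z : R) :
    A - z • E = -E * (algebraMap R (Matrix n n R) z - E⁻¹ * A) := by
  rw [Algebra.algebraMap_eq_smul_one, Matrix.mul_sub, neg_mul, neg_mul,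
    mul_nonsing_inv_cancel_left _ _ ((isUnit_iff_isUnit_det _).1 hE), mul_smul_comm, mul_one]
  abel

theorem inv_pencil_eq_neg_resolvent_mul {A E : Matrix n n R} (hE : IsUnit E) (z : R) :
    (A - z • E)⁻¹ = -(resolvent (E⁻¹ * A) z * E⁻¹) := by
  have hneg : (-E)⁻¹ = -E⁻¹ := Matrix.inv_eq_left_inv <| by
    rw [neg_mul_neg, nonsing_inv_mul _ ((isUnit_iff_isUnit_det _).1 hE)]
  rw [pencil_eq_neg_mul hE, Matrix.mul_inv_rev, hneg, mul_neg, resolvent,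
    ← nonsing_inv_eq_ringInverse]

theorem conjTranspose_resolvent [StarRing R] (M : Matrix n n R) (z : R) :
    (resolvent M z)ᴴ = resolvent Mᴴ (star z) := by
  rw [resolvent, resolvent, ← star_eq_conjTranspose, ← Ring.inverse_star, star_sub,
    ← algebraMap_star_comm, star_eq_conjTranspose]

theorem lyapunov_inv_mul_of_generalized [StarRing R] {A E P Q : Matrix n n R} (hE : IsUnit E)
    (hP : A * P * Eᴴ + E * P * Aᴴ = -Q) :
    E⁻¹ * A * P + P * (E⁻¹ * A)ᴴ = -(E⁻¹ * Q * E⁻¹ᴴ) := by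
  have hdet := (isUnit_iff_isUnit_det _).1 hE
  have hstar : Eᴴ * E⁻¹ᴴ = 1 := by
    rw [← conjTranspose_mul, nonsing_inv_mul _ hdet, conjTranspose_one]
  rw [← neg_mul, ← mul_neg, ← hP]
  simp only [mul_add, add_mul, mul_assoc, hstar, mul_one, conjTranspose_mul,
    nonsing_inv_mul_cancel_left _ _ hdet]

end Pencil

section DescriptorSystem

open Complex
open scoped Matrix.Norms.Operator

variable {n m p : Type*} [Fintype n] [DecidableEq n]

/-- The matrix pencil `A - z E` is stable if all its generalized eigenvalues lie in the open left
half-plane, that is, if the descriptor system `E x' = A x` with `E` invertible is asymptotically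
stable. -/
def IsStablePencil (A E : Matrix n n ℂ) : Prop :=
  ∀ μ : ℂ, (A - μ • E).det = 0 → μ.re < 0

/-- The squared `H₂` norm `(2π)⁻¹ ∫ trace (G(iω)ᴴ G(iω)) dω`. The integrand is real, and its real
part is taken only to land in `ℝ`. -/
def h2NormSq [Fintype m] [Fintype p] (G : ℂ → Matrix p m ℂ) : ℝ :=
  1 / (2 * Real.pi) * ∫ ω : ℝ, (trace ((G (I * ω))ᴴ * G (I * ω))).re

theorem h2NormSq_congr [Fintype m] [Fintype p] {G H : ℂ → Matrix p m ℂ}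
    (h : ∀ ω : ℝ, G (I * ω) = H (I * ω)) : h2NormSq G = h2NormSq H := by
  simp only [h2NormSq, h]

theorem IsStablePencil.isUnit {A E : Matrix n n ℂ} (h : IsStablePencil A E) {z : ℂ}
    (hz : 0 ≤ z.re) : IsUnit (A - z • E) :=
  (isUnit_iff_isUnit_det _).2 (isUnit_iff_ne_zero.2 fun hdet => hz.not_gt (h z hdet))

theorem IsStablePencil.isHurwitz {A E : Matrix n n ℂ} (h : IsStablePencil A E) (hE : IsUnit E) :
    IsHurwitz (E⁻¹ * A) := fun z hz => h z <| by
  by_contra hdet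
  have hunit : IsUnit (A - z • E) := (isUnit_iff_isUnit_det _).2 (isUnit_iff_ne_zero.2 hdet)
  rw [pencil_eq_neg_mul hE] at hunit
  exact hz (isUnit_of_mul_isUnit_right hunit)

theorem inv_pencil_mul_mul_conjTranspose {A E : Matrix n n ℂ} (hE : IsUnit E) (Q : Matrix n n ℂ)
    (ω : ℝ) :
    (A - (I * ω) • E)⁻¹ * Q * (A - (I * ω) • E)⁻¹ᴴ =
      resolvent (E⁻¹ * A) (I * ω) * (E⁻¹ * Q * E⁻¹ᴴ) * resolvent (E⁻¹ * A)ᴴ (-(I * ω)) := by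
  have hstar : star (I * ω : ℂ) = -(I * ω) := by simp
  rw [inv_pencil_eq_neg_resolvent_mul hE, conjTranspose_neg, conjTranspose_mul,
    conjTranspose_resolvent, hstar]
  simp only [neg_mul, mul_neg, neg_neg, mul_assoc]

theorem IsStablePencil.integral_re_trace_mul_mul_conjTranspose [Fintype p] {A E P Q : Matrix n n ℂ}
    (h : IsStablePencil A E) (hE : IsUnit E) (hP : A * P * Eᴴ + E * P * Aᴴ = -Q)
    (C : Matrix p n ℂ) :
    ∫ ω : ℝ, (trace (C * ((A - (I * ω) • E)⁻¹ * Q * (A - (I * ω) • E)⁻¹ᴴ) * Cᴴ)).re =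
      2 * Real.pi * (trace (C * P * Cᴴ)).re := by
  let L : Matrix n n ℂ →ₗ[ℝ] ℝ := reLm ∘ₗ
    ((traceLinearMap p ℂ ℂ ∘ₗ mulRightLinearMap p ℂ Cᴴ) ∘ₗ mulLeftLinearMap n ℂ C).restrictScalars ℝ
  have hstar : IsHurwitz (E⁻¹ * A)ᴴ := (h.isHurwitz hE).star
  simp_rw [inv_pencil_mul_mul_conjTranspose hE]
  exact (h.isHurwitz hE).integral_apply_resolvent_mul_mul_resolvent_neg hstar
    (lyapunov_inv_mul_of_generalized hE hP) L.toContinuousLinearMap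

theorem h2NormSq_transferFunction [Fintype m] [Fintype p] {A E P : Matrix n n ℂ} {B : Matrix n m ℂ}
    (C : Matrix p n ℂ) (hE : IsUnit E) (h : IsStablePencil A E)
    (hP : A * P * Eᴴ + E * P * Aᴴ = -(B * Bᴴ)) :
    h2NormSq (transferFunction A E B C) = (trace (C * P * Cᴴ)).re := by
  have hintegrand (ω : ℝ) : trace ((transferFunction A E B C (I * ω))ᴴ *
      transferFunction A E B C (I * ω)) =
      trace (C * ((A - (I * ω) • E)⁻¹ * (B * Bᴴ) * (A - (I * ω) • E)⁻¹ᴴ) * Cᴴ) := by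
    rw [trace_mul_comm]
    simp only [transferFunction, conjTranspose_mul, Matrix.mul_assoc]
  simp only [h2NormSq, hintegrand, h.integral_re_trace_mul_mul_conjTranspose hE hP]
  field_simp

end DescriptorSystem

section ErrorSystem

open Complex

variable {n n' m p : Type*} [Fintype n] [Fintype n']

theorem fromBlocks_lyapunov {R : Type*} [Ring R] [StarRing R] [Fintype m] {A E P : Matrix n n R}
    {Ah Eh Ph : Matrix n' n' R} {B : Matrix n m R} {Bh : Matrix n' m R} {Pt : Matrix n n' R}
    (hP : A * P * Eᴴ + E * P * Aᴴ = -(B * Bᴴ))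
    (hPh : Ah * Ph * Ehᴴ + Eh * Ph * Ahᴴ = -(Bh * Bhᴴ))
    (hPt : A * Pt * Ehᴴ + E * Pt * Ahᴴ = -(B * Bhᴴ)) :
    fromBlocks A 0 0 Ah * fromBlocks P Pt Ptᴴ Ph * (fromBlocks E 0 0 Eh)ᴴ +
        fromBlocks E 0 0 Eh * fromBlocks P Pt Ptᴴ Ph * (fromBlocks A 0 0 Ah)ᴴ =
      -(fromRows B Bh * (fromRows B Bh)ᴴ) := by
  have hPt' : Ah * Ptᴴ * Eᴴ + Eh * Ptᴴ * Aᴴ = -(Bh * Bᴴ) := by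
    simpa [Matrix.mul_assoc, add_comm] using congrArg conjTranspose hPt
  simp only [conjTranspose_fromRows_eq_fromCols_conjTranspose, fromRows_mul_fromCols,
    fromBlocks_conjTranspose, fromBlocks_multiply, fromBlocks_add, fromBlocks_neg, ← hP, ← hPh,
    ← hPt, ← hPt']
  simp

theorem re_trace_fromCols_mul_fromBlocks_mul [Fintype p] (C : Matrix p n ℂ) (Ch : Matrix p n' ℂ)
    (P : Matrix n n ℂ) (Pt : Matrix n n' ℂ) (Ph : Matrix n' n' ℂ) :
    (trace (fromCols C (-Ch) * fromBlocks P Pt Ptᴴ Ph * (fromCols C (-Ch))ᴴ)).re =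
      (trace (C * P * Cᴴ)).re - 2 * (trace (C * Pt * Chᴴ)).re + (trace (Ch * Ph * Chᴴ)).re := by
  have hcross : (trace (Ch * Ptᴴ * Cᴴ)).re = (trace (C * Pt * Chᴴ)).re := by
    rw [← conj_re, starRingEnd_apply, ← trace_conjTranspose]
    simp [Matrix.mul_assoc]
  rw [conjTranspose_fromCols_eq_fromRows_conjTranspose, fromCols_mul_fromBlocks,
    fromCols_mul_fromRows]
  simp only [conjTranspose_neg, Matrix.add_mul, Matrix.neg_mul, Matrix.mul_neg, trace_add,
    trace_neg, add_re, neg_re, hcross]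
  ring

variable [DecidableEq n] [DecidableEq n']

theorem IsStablePencil.fromBlocks {A E : Matrix n n ℂ} {Ah Eh : Matrix n' n' ℂ}
    (h : IsStablePencil A E) (hh : IsStablePencil Ah Eh) :
    IsStablePencil (fromBlocks A 0 0 Ah) (fromBlocks E 0 0 Eh) := fun μ hμ => by
  rw [fromBlocks_smul, sub_eq_add_neg, fromBlocks_neg, fromBlocks_add] at hμ
  simp only [smul_zero, neg_zero, add_zero, ← sub_eq_add_neg, det_fromBlocks_zero₂₁] at hμ
  exact (mul_eq_zero.1 hμ).elim (h μ) (hh μ)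

theorem transferFunction_sub_transferFunction {R : Type*} [CommRing R] {A E : Matrix n n R}
    {Ah Eh : Matrix n' n' R} (B : Matrix n m R) (C : Matrix p n R) (Bh : Matrix n' m R)
    (Ch : Matrix p n' R) {s : R} (h : IsUnit (A - s • E)) (hh : IsUnit (Ah - s • Eh)) :
    transferFunction A E B C s - transferFunction Ah Eh Bh Ch s =
      transferFunction (fromBlocks A 0 0 Ah) (fromBlocks E 0 0 Eh) (fromRows B Bh)
        (fromCols C (-Ch)) s := by
  have hpencil : fromBlocks A 0 0 Ah - s • fromBlocks E 0 0 Eh =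
      fromBlocks (A - s • E) 0 0 (Ah - s • Eh) := by
    simp only [fromBlocks_smul, sub_eq_add_neg, fromBlocks_neg, fromBlocks_add, smul_zero, neg_zero,
      add_zero]
  simp only [transferFunction]
  rw [hpencil, inv_fromBlocks_zero₂₁_of_isUnit_iff _ _ _ (iff_of_true h hh),
    fromCols_mul_fromBlocks, fromCols_mul_fromRows]
  simp [sub_eq_add_neg]

theorem h2_error_gramian_formula_general [Fintype m] [Fintype p] {A E P : Matrix n n ℂ}
    {Ah Eh Ph : Matrix n' n' ℂ} {B : Matrix n m ℂ} (C : Matrix p n ℂ) {Bh : Matrix n' m ℂ}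
    (Ch : Matrix p n' ℂ) {Pt : Matrix n n' ℂ} (hE : IsUnit E) (hEh : IsUnit Eh)
    (hstab : IsStablePencil A E) (hstabh : IsStablePencil Ah Eh)
    (hP : A * P * Eᴴ + E * P * Aᴴ = -(B * Bᴴ))
    (hPh : Ah * Ph * Ehᴴ + Eh * Ph * Ahᴴ = -(Bh * Bhᴴ))
    (hPt : A * Pt * Ehᴴ + E * Pt * Ahᴴ = -(B * Bhᴴ)) :
    h2NormSq (transferFunction A E B C - transferFunction Ah Eh Bh Ch) =
      (trace (C * P * Cᴴ)).re - 2 * (trace (C * Pt * Chᴴ)).re + (trace (Ch * Ph * Chᴴ)).re := by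
  have herror (ω : ℝ) := transferFunction_sub_transferFunction B C Bh Ch
    (hstab.isUnit (z := I * ω) (by simp)) (hstabh.isUnit (z := I * ω) (by simp))
  rw [h2NormSq_congr herror, h2NormSq_transferFunction _ (isUnit_fromBlocks_zero₂₁.2 ⟨hE, hEh⟩)
    (hstab.fromBlocks hstabh) (fromBlocks_lyapunov hP hPh hPt),
    re_trace_fromCols_mul_fromBlocks_mul]

end ErrorSystem

section Complexification

variable {a b c : ℕ}

theorem cmap_mul (A : Matrix (Fin a) (Fin b) ℝ) (B : Matrix (Fin b) (Fin c) ℝ) :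
    cmap (A * B) = cmap A * cmap B :=
  Matrix.map_mul (f := Complex.ofRealHom)

theorem conjTranspose_cmap (A : Matrix (Fin a) (Fin b) ℝ) : (cmap A)ᴴ = cmap Aᵀ := by
  ext i j
  simp [cmap]

theorem isUnit_cmap {E : Matrix (Fin a) (Fin a) ℝ} (hE : IsUnit E) : IsUnit (cmap E) :=
  hE.map Complex.ofRealHom.mapMatrix

theorem cmap_sylvester {A E : Matrix (Fin a) (Fin a) ℝ} {A' E' : Matrix (Fin b) (Fin b) ℝ}
    {B : Matrix (Fin a) (Fin c) ℝ} {B' : Matrix (Fin b) (Fin c) ℝ} {X : Matrix (Fin a) (Fin b) ℝ}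
    (hX : A * X * E'ᵀ + E * X * A'ᵀ = -(B * B'ᵀ)) :
    cmap A * cmap X * (cmap E')ᴴ + cmap E * cmap X * (cmap A')ᴴ = -(cmap B * (cmap B')ᴴ) := by
  simp only [conjTranspose_cmap, ← cmap_mul]
  ext i j
  simpa [cmap] using congrArg (fun M => (M i j : ℂ)) hX

theorem re_trace_cmap_mul_mul_conjTranspose (C : Matrix (Fin c) (Fin a) ℝ)
    (X : Matrix (Fin a) (Fin b) ℝ) (C' : Matrix (Fin c) (Fin b) ℝ) :
    (trace (cmap C * cmap X * (cmap C')ᴴ)).re = trace (C * X * C'ᵀ) := by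
  simp only [conjTranspose_cmap, ← cmap_mul]
  simp [cmap, trace]

end Complexification

theorem h2_error_gramian_formula {N r' m p : ℕ}
    (A E : Matrix (Fin N) (Fin N) ℝ) (B : Matrix (Fin N) (Fin m) ℝ)
    (C : Matrix (Fin p) (Fin N) ℝ)
    (Ah Eh : Matrix (Fin r') (Fin r') ℝ) (Bh : Matrix (Fin r') (Fin m) ℝ)
    (Ch : Matrix (Fin p) (Fin r') ℝ)
    (hE : IsUnit E) (hEh : IsUnit Eh)
    (hstab : ∀ μ : ℂ, (cmap A - μ • cmap E).det = 0 → μ.re < 0)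
    (hstabh : ∀ μ : ℂ, (cmap Ah - μ • cmap Eh).det = 0 → μ.re < 0)
    (P : Matrix (Fin N) (Fin N) ℝ) (Ph : Matrix (Fin r') (Fin r') ℝ)
    (Pt : Matrix (Fin N) (Fin r') ℝ)
    (hP : A * P * Eᵀ + E * P * Aᵀ = -(B * Bᵀ))
    (hPh : Ah * Ph * Ehᵀ + Eh * Ph * Ahᵀ = -(Bh * Bhᵀ))
    (hPt : A * Pt * Ehᵀ + E * Pt * Ahᵀ = -(B * Bhᵀ))
    (Hd : ℝ → Matrix (Fin p) (Fin m) ℂ)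
    (hHd : ∀ ω : ℝ, Hd ω =
        cmap C * (cmap A - (Complex.I * ω) • cmap E)⁻¹ * cmap B -
          cmap Ch * (cmap Ah - (Complex.I * ω) • cmap Eh)⁻¹ * cmap Bh) :
    (1 / (2 * Real.pi)) * ∫ ω : ℝ, (Matrix.trace ((Hd ω)ᴴ * Hd ω)).re =
      Matrix.trace (C * P * Cᵀ) - 2 * Matrix.trace (C * Pt * Chᵀ) +
        Matrix.trace (Ch * Ph * Chᵀ) := by
  simpa [h2NormSq, transferFunction, hHd, re_trace_cmap_mul_mul_conjTranspose] using
    h2_error_gramian_formula_general (cmap C) (cmap Ch) (isUnit_cmap hE) (isUnit_cmap hEh)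
      hstab hstabh (cmap_sylvester hP) (cmap_sylvester hPh) (cmap_sylvester hPt)

end
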